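/- Let H : ℝⁿ → [0,∞) be a strictly convex C¹ function with H(0) = DH(0) = 0 and H superlinear, and let L be the Legendre–Fenchel transform of H. Suppose there exist constants C > 1 and C' > 1 such that H(2x)/H(x) > 2C for every x ≠ 0 and sup_{∂B(0,r)} H < C'·inf_{∂B(0,r)} H for every r > 0. Then there exists a constant C'' < ∞ such that |DL(q)| ≤ C''·L(q)/|q| for every q ≠ 0. -/

import Mathlib

open MeasureTheory Filter Metric Set
open scoped RealInnerProductSpace ENNReal Topology NNReal

noncomputable section

/-- Euclidean space `ℝⁿ`. -/
abbrev Eucl (n : ℕ) := EuclideanSpace ℝ (Fin n)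

/-- Infimal convolution (Hopf–Lax formula): `u_t(x) = inf_a ( u(x + t a) + t L(a) )`. -/
def infConv {n : ℕ} (u L : Eucl n → ℝ) (t : ℝ) (x : Eucl n) : ℝ :=
  ⨅ a : Eucl n, (u (x + t • a) + t * L a)

/-- `L` is superlinear: `L x / ‖x‖ → ∞` as `‖x‖ → ∞`. -/
def Superlinear {n : ℕ} (L : Eucl n → ℝ) : Prop :=
  Tendsto (fun x => L x / ‖x‖) (Bornology.cobounded (Eucl n)) atTop

/-- `g` is the weak (distributional) gradient of `u` on `ℝⁿ`. -/
def HasWeakGradient {n : ℕ} (u : Eucl n → ℝ) (g : Eucl n → Eucl n) : Prop :=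
  ∀ φ : Eucl n → ℝ, ContDiff ℝ (⊤ : ℕ∞) φ → HasCompactSupport φ →
    ∀ v : Eucl n, ∫ x, u x * fderiv ℝ φ x v = - ∫ x, φ x * ⟪g x, v⟫

/-- The set `R u_t(x)` of minimizers in the infimal convolution. -/
def minSet {n : ℕ} (u L : Eucl n → ℝ) (t : ℝ) (x : Eucl n) : Set (Eucl n) :=
  {a | infConv u L t x = u (x + t • a) + t * L a}

/-- The Legendre–Fenchel transform `L(q) = sup_p ( p·q − H(p) )`. -/
def legendre {n : ℕ} (H : Eucl n → ℝ) (q : Eucl n) : ℝ :=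
  ⨆ p : Eucl n, (⟪p, q⟫ - H p)

/-!
The hypotheses on `H` dualize. The doubling inequality `2 C H(x) ≤ H(2x)` becomes
`L(C q) ≤ 2 C L(q)`, and comparability of `H` on spheres becomes `C' L(z) ≤ L(C' y)` whenever
`|z| ≤ |y|`. Iterating the first and inserting the second, `L` is bounded on the ball of radius
`2|q|` by a fixed multiple of `L(q)`. Moving from `q` a distance `|q|` in the direction of
a subgradient `p` raises `L` by at least `|p| |q|`, which is therefore at most a multiple of `L(q)`.
By strict convexity of `H` the maximizer in the definition of `L(q)` is unique, hence continuous in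
`q`; maximizers are subgradients of `L`, and a continuous selection of subgradients is a gradient.
-/

section Subgradient

variable {E : Type*} [NormedAddCommGroup E] [InnerProductSpace ℝ E] {f : E → ℝ} {p q : E}

/-- `p` is a subgradient of `f` at `q`: the affine function with gradient `p` that agrees with `f`
at `q` lies below `f` everywhere. It replaces the gradient where `f` need not be differentiable. -/
def IsSubgradientAt (f : E → ℝ) (p q : E) : Prop :=
  ∀ x, f q + ⟪p, x - q⟫ ≤ f x

theorem exists_norm_eq_and_inner_eq_mul_norm {r : ℝ} (hr : 0 ≤ r) {y : E} (hy : y ≠ 0) :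
    ∃ v : E, ‖v‖ = r ∧ ⟪v, y⟫ = r * ‖y‖ := by
  have hy' : ‖y‖ ≠ 0 := norm_ne_zero_iff.2 hy
  refine ⟨(r / ‖y‖) • y, ?_, ?_⟩
  · rw [norm_smul, norm_div, norm_norm, div_mul_cancel₀ _ hy', Real.norm_of_nonneg hr]
  · rw [real_inner_smul_left, real_inner_self_eq_norm_sq]
    field_simp

theorem IsSubgradientAt.norm_mul_le_sub {r M : ℝ} (hp : IsSubgradientAt f p q) (hr : 0 ≤ r)
    (hM : ∀ x ∈ closedBall q r, f x ≤ M) : ‖p‖ * r ≤ M - f q := by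
  rcases eq_or_ne p 0 with rfl | hp0
  · simpa using hM q (mem_closedBall_self hr)
  · obtain ⟨v, hnorm, hinner⟩ := exists_norm_eq_and_inner_eq_mul_norm hr hp0
    have hsub : f q + ⟪p, v⟫ ≤ f (q + v) := by simpa using hp (q + v)
    have hbound : f (q + v) ≤ M := hM _ (by simp [hnorm])
    rw [real_inner_comm, hinner] at hsub
    linarith

theorem hasGradientAt_of_isSubgradientAt [CompleteSpace E] {P : E → E}
    (hP : ∀ x, IsSubgradientAt f (P x) x) (hcont : ContinuousAt P q) :
    HasGradientAt f (P q) q := by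
  rw [hasGradientAt_iff_isLittleO, Asymptotics.isLittleO_iff]
  intro ε hε
  filter_upwards [Metric.tendsto_nhds.1 hcont ε hε] with x hx
  have hlower : 0 ≤ f x - f q - ⟪P q, x - q⟫ := by linarith [hP q x]
  have hupper : f x - f q - ⟪P q, x - q⟫ ≤ ⟪P x - P q, x - q⟫ := by
    have hsub := hP x q
    rw [← neg_sub x q, inner_neg_right] at hsub
    rw [inner_sub_left]
    linarith
  calc ‖f x - f q - ⟪P q, x - q⟫‖ = f x - f q - ⟪P q, x - q⟫ := Real.norm_of_nonneg hlower
    _ ≤ ⟪P x - P q, x - q⟫ := hupper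
    _ ≤ ‖P x - P q‖ * ‖x - q‖ := real_inner_le_norm _ _
    _ ≤ ε * ‖x - q‖ := by
      gcongr
      exact (dist_eq_norm (P x) (P q) ▸ hx).le

end Subgradient

section Legendre

variable {n : ℕ} {H : Eucl n → ℝ} {p q : Eucl n}

theorem inner_sub_le_legendre (hbdd : BddAbove (range fun p => ⟪p, q⟫ - H p)) (p : Eucl n) :
    ⟪p, q⟫ - H p ≤ legendre H q :=
  le_ciSup hbdd p

theorem legendre_nonneg (hH0 : H 0 = 0) (hbdd : BddAbove (range fun p => ⟪p, q⟫ - H p)) :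
    0 ≤ legendre H q := by
  simpa [hH0] using inner_sub_le_legendre hbdd 0

/-- `p` attains the supremum defining the Legendre transform of `H` at `q`; for a differentiable
convex `H` this says `q = DH(p)`. -/
def IsLegendreMaximizer (H : Eucl n → ℝ) (p q : Eucl n) : Prop :=
  ∀ x, ⟪x, q⟫ - H x ≤ ⟪p, q⟫ - H p

theorem Superlinear.tendsto_inner_sub_atBot (hH : Superlinear H) (q : Eucl n) :
    Tendsto (fun p => ⟪p, q⟫ - H p) (Bornology.cobounded (Eucl n)) atBot := by
  have hprod : Tendsto (fun p => (H p / ‖p‖ + -‖q‖) * ‖p‖) (Bornology.cobounded (Eucl n)) atTop :=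
    (tendsto_atTop_add_const_right _ _ hH).atTop_mul_atTop₀ tendsto_norm_cobounded_atTop
  refine tendsto_atBot_mono' _ ?_ (tendsto_neg_atTop_atBot.comp hprod)
  filter_upwards [Bornology.eventually_ne_cobounded (0 : Eucl n)] with p hp
  have hexpand : (H p / ‖p‖ + -‖q‖) * ‖p‖ = H p - ‖p‖ * ‖q‖ := by
    have := norm_ne_zero_iff.2 hp
    field_simp
    ring
  rw [Function.comp_apply, hexpand]
  linarith [real_inner_le_norm p q]

theorem Superlinear.exists_isLegendreMaximizer (hH : Superlinear H) (hc : Continuous H)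
    (q : Eucl n) : ∃ p, IsLegendreMaximizer H p q :=
  Continuous.exists_forall_ge (f := fun p => ⟪p, q⟫ - H p) (by fun_prop)
    (cobounded_eq_cocompact (α := Eucl n) ▸ hH.tendsto_inner_sub_atBot q)

theorem IsLegendreMaximizer.bddAbove (hp : IsLegendreMaximizer H p q) :
    BddAbove (range fun p => ⟪p, q⟫ - H p) :=
  ⟨_, forall_mem_range.2 hp⟩

theorem Superlinear.bddAbove_range_inner_sub (hH : Superlinear H) (hc : Continuous H)
    (q : Eucl n) : BddAbove (range fun p => ⟪p, q⟫ - H p) :=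
  (hH.exists_isLegendreMaximizer hc q).choose_spec.bddAbove

theorem IsLegendreMaximizer.legendre_eq (hp : IsLegendreMaximizer H p q) :
    legendre H q = ⟪p, q⟫ - H p :=
  le_antisymm (ciSup_le hp) (inner_sub_le_legendre hp.bddAbove p)

theorem IsLegendreMaximizer.isSubgradientAt (hp : IsLegendreMaximizer H p q)
    (hbdd : ∀ x, BddAbove (range fun p => ⟪p, x⟫ - H p)) :
    IsSubgradientAt (legendre H) p q := fun x => by
  rw [hp.legendre_eq, inner_sub_right]
  linarith [inner_sub_le_legendre (hbdd x) p]

theorem IsLegendreMaximizer.eq_of_strictConvexOn {p' : Eucl n}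
    (hH : StrictConvexOn ℝ univ H) (hp : IsLegendreMaximizer H p q)
    (hp' : IsLegendreMaximizer H p' q) : p = p' := by
  have hinner : ConcaveOn ℝ univ fun x : Eucl n => ⟪x, q⟫ :=
    ((innerₗ (Eucl n)).flip q).concaveOn convex_univ
  have hmin {z : Eucl n} (hz : IsLegendreMaximizer H z q) :
      IsMinOn (H - fun x => ⟪x, q⟫) univ z := fun x _ => by
    simpa using neg_le_neg (hz x)
  exact (hH.sub_concaveOn hinner).eq_of_isMinOn (hmin hp) (hmin hp') trivial trivial

theorem Superlinear.exists_norm_le_of_isLegendreMaximizer (hH : Superlinear H) (R : ℝ) :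
    ∃ B, ∀ p q, ‖q‖ ≤ R → IsLegendreMaximizer H p q → ‖p‖ ≤ B := by
  have hfar : ∀ᶠ p in Bornology.cobounded (Eucl n), R + 1 < H p / ‖p‖ ∧ |H 0| < ‖p‖ :=
    (hH.eventually_gt_atTop _).and (tendsto_norm_cobounded_atTop.eventually_gt_atTop _)
  obtain ⟨B, hB⟩ := (Bornology.isBounded_compl_iff.2 hfar).exists_norm_le
  refine ⟨B, fun p q hq hp => hB p ?_⟩
  rintro ⟨hslope, hlarge⟩
  rw [lt_div_iff₀ ((abs_nonneg _).trans_lt hlarge)] at hslope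
  have hmax : H p ≤ H 0 + ⟪p, q⟫ := by
    have := hp 0
    rw [inner_zero_left] at this
    linarith
  have hinner : ⟪p, q⟫ ≤ R * ‖p‖ := by
    calc ⟪p, q⟫ ≤ ‖p‖ * ‖q‖ := real_inner_le_norm p q
      _ ≤ ‖p‖ * R := by gcongr
      _ = R * ‖p‖ := mul_comm _ _
  linarith [le_abs_self (H 0)]

theorem Superlinear.continuousAt_of_isLegendreMaximizer (hH : Superlinear H) (hc : Continuous H)
    {P : Eucl n → Eucl n} (hP : ∀ x, IsLegendreMaximizer H (P x) x)
    (huniq : ∀ p, IsLegendreMaximizer H p q → p = P q) : ContinuousAt P q := by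
  obtain ⟨B, hB⟩ := hH.exists_norm_le_of_isLegendreMaximizer (‖q‖ + 1)
  have hball : ∀ᶠ x in 𝓝 q, P x ∈ closedBall 0 B := by
    filter_upwards [continuous_norm.continuousAt.eventually_le_const (lt_add_one ‖q‖)] with x hx
    exact mem_closedBall_zero_iff.2 (hB _ x hx (hP x))
  refine (isCompact_closedBall 0 B).tendsto_nhds_of_unique_mapClusterPt hball fun p _ hp => ?_
  obtain ⟨U, hU, hPU⟩ := mapClusterPt_iff_ultrafilter.1 hp
  have hidU : Tendsto (fun y => y) (U : Filter (Eucl n)) (𝓝 q) := hU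
  refine huniq p fun x => ?_
  have hleft : Tendsto (fun y => ⟪x, y⟫ - H x) U (𝓝 (⟪x, q⟫ - H x)) :=
    (tendsto_const_nhds.inner hidU).sub tendsto_const_nhds
  have hright : Tendsto (fun y => ⟪P y, y⟫ - H (P y)) U (𝓝 (⟪p, q⟫ - H p)) :=
    (hPU.inner hidU).sub ((hc.tendsto p).comp hPU)
  exact le_of_tendsto_of_tendsto' hleft hright fun y => hP y x

theorem IsLegendreMaximizer.hasGradientAt_legendre (hp : IsLegendreMaximizer H p q)
    (hH : Superlinear H) (hc : Continuous H) (hconv : StrictConvexOn ℝ univ H) :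
    HasGradientAt (legendre H) p q := by
  choose P hP using hH.exists_isLegendreMaximizer hc
  have hcont : ContinuousAt P q :=
    hH.continuousAt_of_isLegendreMaximizer hc hP fun _ hz => hz.eq_of_strictConvexOn hconv (hP q)
  rw [hp.eq_of_strictConvexOn hconv (hP q)]
  exact hasGradientAt_of_isSubgradientAt
    (fun x => (hP x).isSubgradientAt (hH.bddAbove_range_inner_sub hc)) hcont

theorem Superlinear.isSubgradientAt_gradient_legendre (hH : Superlinear H) (hc : Continuous H)
    (hconv : StrictConvexOn ℝ univ H) (q : Eucl n) :
    IsSubgradientAt (legendre H) (gradient (legendre H) q) q := by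
  obtain ⟨p, hp⟩ := hH.exists_isLegendreMaximizer hc q
  rw [(hp.hasGradientAt_legendre hH hc hconv).gradient]
  exact hp.isSubgradientAt (hH.bddAbove_range_inner_sub hc)

end Legendre

section Growth

variable {n : ℕ} {H : Eucl n → ℝ} {C C' : ℝ}

theorem two_mul_mul_le_of_lt_div (hH_nonneg : ∀ x, 0 ≤ H x) (hH0 : H 0 = 0)
    (hdouble : ∀ x : Eucl n, x ≠ 0 → 2 * C < H ((2 : ℝ) • x) / H x) (x : Eucl n) :
    2 * C * H x ≤ H ((2 : ℝ) • x) := by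
  rcases (hH_nonneg x).eq_or_lt with hx | hx
  · simpa [← hx] using hH_nonneg ((2 : ℝ) • x)
  · refine ((lt_div_iff₀ hx).1 (hdouble x ?_)).le
    rintro rfl
    exact hx.ne' hH0

theorem le_mul_of_sSup_sphere_lt_mul_sInf (hc : Continuous H) (hH0 : H 0 = 0) (hC' : 0 ≤ C')
    (hquasi : ∀ r : ℝ, 0 < r →
      sSup (H '' sphere (0 : Eucl n) r) < C' * sInf (H '' sphere (0 : Eucl n) r))
    {x y : Eucl n} (hxy : ‖x‖ = ‖y‖) : H x ≤ C' * H y := by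
  rcases eq_or_ne y 0 with rfl | hy
  · rw [norm_zero, norm_eq_zero] at hxy
    simp [hxy, hH0]
  · have himage : IsCompact (H '' sphere 0 ‖y‖) := (isCompact_sphere _ _).image hc
    calc H x ≤ sSup (H '' sphere 0 ‖y‖) :=
          le_csSup himage.bddAbove (mem_image_of_mem H (by simpa using hxy))
      _ ≤ C' * sInf (H '' sphere 0 ‖y‖) := (hquasi _ (norm_pos_iff.2 hy)).le
      _ ≤ C' * H y := by
        gcongr
        exact csInf_le himage.bddBelow (mem_image_of_mem H (by simp))

theorem legendre_smul_le (hC : 0 ≤ C) (hdouble : ∀ x, 2 * C * H x ≤ H ((2 : ℝ) • x))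
    {q : Eucl n} (hbdd : BddAbove (range fun p => ⟪p, q⟫ - H p)) :
    legendre H (C • q) ≤ 2 * C * legendre H q := by
  refine ciSup_le fun p => ?_
  obtain ⟨x, rfl⟩ : ∃ x, p = (2 : ℝ) • x := ⟨(2 : ℝ)⁻¹ • p, by simp⟩
  calc ⟪(2 : ℝ) • x, C • q⟫ - H ((2 : ℝ) • x)
      ≤ ⟪(2 : ℝ) • x, C • q⟫ - 2 * C * H x := by gcongr; exact hdouble x
    _ = 2 * C * (⟪x, q⟫ - H x) := by
      rw [real_inner_smul_left, real_inner_smul_right]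
      ring
    _ ≤ 2 * C * legendre H q := by
      gcongr
      exact inner_sub_le_legendre hbdd x

theorem legendre_pow_smul_le (hC : 0 ≤ C) (hdouble : ∀ x, 2 * C * H x ≤ H ((2 : ℝ) • x))
    (hbdd : ∀ q, BddAbove (range fun p => ⟪p, q⟫ - H p)) (k : ℕ) (q : Eucl n) :
    legendre H (C ^ k • q) ≤ (2 * C) ^ k * legendre H q := by
  induction k with
  | zero => simp
  | succ k ih =>
    calc legendre H (C ^ (k + 1) • q) = legendre H (C • C ^ k • q) := by rw [pow_succ', mul_smul]
      _ ≤ 2 * C * legendre H (C ^ k • q) := legendre_smul_le hC hdouble (hbdd _)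
      _ ≤ 2 * C * ((2 * C) ^ k * legendre H q) := by gcongr
      _ = (2 * C) ^ (k + 1) * legendre H q := by ring

theorem mul_legendre_le_of_norm_le (hC' : 0 < C')
    (hquasi : ∀ x y, ‖x‖ = ‖y‖ → H x ≤ C' * H y) {y z : Eucl n} (hzy : ‖z‖ ≤ ‖y‖)
    (hbdd : BddAbove (range fun p => ⟪p, C' • y⟫ - H p)) :
    C' * legendre H z ≤ legendre H (C' • y) := by
  rw [← le_div_iff₀' hC']
  refine ciSup_le fun p => ?_
  rw [le_div_iff₀' hC']
  obtain ⟨p', hnorm, hinner⟩ : ∃ p' : Eucl n, ‖p'‖ = ‖p‖ ∧ ⟪p', y⟫ = ‖p‖ * ‖y‖ := by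
    rcases eq_or_ne y 0 with rfl | hy
    · exact ⟨p, rfl, by simp⟩
    · exact exists_norm_eq_and_inner_eq_mul_norm (norm_nonneg p) hy
  calc C' * (⟪p, z⟫ - H p) = C' * ⟪p, z⟫ - C' * H p := mul_sub _ _ _
    _ ≤ C' * (‖p‖ * ‖y‖) - H p' := by
      gcongr
      · exact (real_inner_le_norm p z).trans (by gcongr)
      · exact hquasi p' p hnorm
    _ = ⟪p', C' • y⟫ - H p' := by rw [real_inner_smul_right, hinner]
    _ ≤ legendre H (C' • y) := inner_sub_le_legendre hbdd p'

theorem exists_forall_legendre_le_of_norm_le (hC : 1 < C)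
    (hdouble : ∀ x, 2 * C * H x ≤ H ((2 : ℝ) • x)) (hC' : 0 < C')
    (hquasi : ∀ x y, ‖x‖ = ‖y‖ → H x ≤ C' * H y)
    (hbdd : ∀ q, BddAbove (range fun p => ⟪p, q⟫ - H p)) (R : ℝ) :
    ∃ K, ∀ q z : Eucl n, ‖z‖ ≤ R * ‖q‖ → legendre H z ≤ K * legendre H q := by
  obtain ⟨k, hk⟩ := pow_unbounded_of_one_lt (R * C') hC
  refine ⟨(2 * C) ^ k / C', fun q z hz => ?_⟩
  have hnorm : ‖z‖ ≤ ‖(C ^ k / C') • q‖ := by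
    rw [norm_smul, Real.norm_of_nonneg (by positivity)]
    refine hz.trans ?_
    gcongr
    exact ((lt_div_iff₀ hC').2 hk).le
  rw [div_mul_eq_mul_div, le_div_iff₀' hC']
  calc C' * legendre H z ≤ legendre H (C' • (C ^ k / C') • q) :=
        mul_legendre_le_of_norm_le hC' hquasi hnorm (hbdd _)
    _ = legendre H (C ^ k • q) := by rw [smul_smul, mul_div_cancel₀ _ hC'.ne']
    _ ≤ (2 * C) ^ k * legendre H q := legendre_pow_smul_le (by linarith) hdouble hbdd k q

end Growth

theorem stmt9_general {n : ℕ}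
    (H : Eucl n → ℝ) (hH_nonneg : ∀ x, 0 ≤ H x) (hc : Continuous H) (hH0 : H 0 = 0)
    (hH_sl : Superlinear H)
    (C C' : ℝ) (hC : 1 < C) (hC' : 0 < C')
    (hdouble : ∀ x : Eucl n, x ≠ 0 → 2 * C < H ((2 : ℝ) • x) / H x)
    (hquasi : ∀ r : ℝ, 0 < r →
      sSup (H '' Metric.sphere (0 : Eucl n) r) < C' * sInf (H '' Metric.sphere (0 : Eucl n) r)) :
    ∃ C'' : ℝ, ∀ q : Eucl n, q ≠ 0 → ∀ p : Eucl n, IsSubgradientAt (legendre H) p q →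
      ‖p‖ ≤ C'' * legendre H q / ‖q‖ := by
  have hbdd := hH_sl.bddAbove_range_inner_sub hc
  obtain ⟨K, hK⟩ := exists_forall_legendre_le_of_norm_le hC
    (two_mul_mul_le_of_lt_div hH_nonneg hH0 hdouble) hC'
    (fun _ _ => le_mul_of_sSup_sphere_lt_mul_sInf hc hH0 hC'.le hquasi) hbdd 2
  refine ⟨K, fun q hq p hp => ?_⟩
  have hball : ∀ z ∈ closedBall q ‖q‖, legendre H z ≤ K * legendre H q := fun z hz =>
    hK q z (by linarith [norm_le_norm_add_norm_sub' z q, mem_closedBall_iff_norm.1 hz])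
  rw [le_div_iff₀ (norm_pos_iff.2 hq)]
  linarith [hp.norm_mul_le_sub (norm_nonneg q) hball, legendre_nonneg hH0 (hbdd q)]

/-- Proposition 2.7. If `H` is a nonnegative strictly convex superlinear
`C¹` function with `H(0) = DH(0) = 0` satisfying `H(2x)/H(x) > 2C` and the quasi-radiality
condition on spheres, then its Legendre transform `L` satisfies
`|DL(q)| ≤ C'' L(q)/|q|` for all `q ≠ 0`. -/
theorem stmt9 {n : ℕ}
    (H : Eucl n → ℝ) (hH_nonneg : ∀ x, 0 ≤ H x) (hH_conv : StrictConvexOn ℝ Set.univ H)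
    (hH_C1 : ContDiff ℝ 1 H) (hH0 : H 0 = 0) (hDH0 : gradient H 0 = 0)
    (hH_sl : Superlinear H)
    (C C' : ℝ) (hC : 1 < C) (hC' : 1 < C')
    (hdouble : ∀ x : Eucl n, x ≠ 0 → 2 * C < H ((2 : ℝ) • x) / H x)
    (hquasi : ∀ r : ℝ, 0 < r →
      sSup (H '' Metric.sphere (0 : Eucl n) r) < C' * sInf (H '' Metric.sphere (0 : Eucl n) r)) :
    ∃ C'' : ℝ, ∀ q : Eucl n, q ≠ 0 →
      ‖gradient (legendre H) q‖ ≤ C'' * legendre H q / ‖q‖ := by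
  obtain ⟨C'', h⟩ :=
    stmt9_general H hH_nonneg hH_C1.continuous hH0 hH_sl C C' hC (one_pos.trans hC') hdouble hquasi
  exact ⟨C'', fun q hq =>
    h q hq _ (hH_sl.isSubgradientAt_gradient_legendre hH_C1.continuous hH_conv q)⟩
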